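/- Let n ≥ 5 and 2 ≤ k ≤ ⌊n/2⌋ be integers, let c be real and H > 0 real, and let m ≥ 1 be an integer. Suppose λ_1,…,λ_m and μ_1,…,μ_m are reals satisfying: k·λ_1 + (n−k)·μ_1 = nH; k·λ_α + (n−k)·μ_α = 0 for every 2 ≤ α ≤ m; α(n,k,H,c) = (n−1)c + nH·λ_1 − Σ_{α=1}^m λ_α²; and α(n,k,H,c) = (n−1)c + nH·μ_1 − Σ_{α=1}^m μ_α². Then λ_1 = H + (n−2k)·φ(k)·(c+H²)/(kH) and μ_1 = H − (n−2k)·φ(k)·(c+H²)/((n−k)H), where φ(k) := k(n−k)/(k(n−2k)+n(k−1)(n−k)). -/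

import Mathlib

noncomputable def phiK (n k : ℕ) : ℝ :=
  (k : ℝ) * ((n : ℝ) - (k : ℝ)) /
    ((k : ℝ) * ((n : ℝ) - 2 * (k : ℝ)) + (n : ℝ) * ((k : ℝ) - 1) * ((n : ℝ) - (k : ℝ)))

noncomputable def alphaF (n k : ℕ) (H c : ℝ) : ℝ :=
  ((n : ℝ) - 1 - ((n : ℝ) - 2) * phiK n k) * (c + H ^ 2)

theorem stmt_15 (n k m : ℕ) (hn : 5 ≤ n) (hk : 2 ≤ k) (hk' : k ≤ n / 2) (hm : 1 ≤ m)
    (c H : ℝ) (hH : 0 < H) (lam mu : Fin m → ℝ)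
    (h1 : (k : ℝ) * lam ⟨0, hm⟩ + ((n : ℝ) - (k : ℝ)) * mu ⟨0, hm⟩ = (n : ℝ) * H)
    (h2 : ∀ a : Fin m, (a : ℕ) ≠ 0 → (k : ℝ) * lam a + ((n : ℝ) - (k : ℝ)) * mu a = 0)
    (h3 : alphaF n k H c =
      ((n : ℝ) - 1) * c + (n : ℝ) * H * lam ⟨0, hm⟩ - ∑ a : Fin m, lam a ^ 2)
    (h4 : alphaF n k H c =
      ((n : ℝ) - 1) * c + (n : ℝ) * H * mu ⟨0, hm⟩ - ∑ a : Fin m, mu a ^ 2) :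
    lam ⟨0, hm⟩ = H + ((n : ℝ) - 2 * (k : ℝ)) * phiK n k * (c + H ^ 2) / ((k : ℝ) * H) ∧
    mu ⟨0, hm⟩ = H - ((n : ℝ) - 2 * (k : ℝ)) * phiK n k * (c + H ^ 2) /
      (((n : ℝ) - (k : ℝ)) * H) := by
  have hn2 : (5 : ℝ) ≤ n := by exact_mod_cast hn
  have hk2 : (2 : ℝ) ≤ k := by exact_mod_cast hk
  have hkn : (2 : ℝ) * k ≤ n := by
    have : 2 * k ≤ n := by omega
    exact_mod_cast this
  have hl : (0 : ℝ) < (n : ℝ) - k := by linarith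
  have hk0 : (0 : ℝ) < k := by linarith
  obtain ⟨p, rfl⟩ : ∃ p, m = p + 1 := ⟨m - 1, by omega⟩
  have e0 : (⟨0, hm⟩ : Fin (p + 1)) = 0 := rfl
  rw [e0] at h1 h3 h4 ⊢
  rw [Fin.sum_univ_succ] at h3 h4
  have hS : ((n : ℝ) - k) ^ 2 * ∑ i : Fin p, mu i.succ ^ 2
      = (k : ℝ) ^ 2 * ∑ i : Fin p, lam i.succ ^ 2 := by
    rw [Finset.mul_sum, Finset.mul_sum]
    refine Finset.sum_congr rfl fun i _ => ?_
    have h := h2 i.succ (by simp)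
    have h' : ((n : ℝ) - k) * mu i.succ = -(k * lam i.succ) := by linarith
    rw [← mul_pow, h']; ring
  unfold alphaF at h3 h4
  generalize phiK n k = f at *
  generalize (∑ i : Fin p, mu i.succ ^ 2) = T at *
  generalize (∑ i : Fin p, lam i.succ ^ 2) = S at *
  generalize lam 0 = L at *
  generalize mu 0 = M at *
  generalize (n : ℝ) = N at *
  generalize (k : ℝ) = K at *
  obtain ⟨x, rfl⟩ : ∃ x, M = H - K * x := ⟨(H - M) / K, by field_simp; ring⟩
  have hL : L = H + (N - K) * x := by
    apply mul_left_cancel₀ hk0.ne'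
    linarith
  subst hL
  have key : (N - 2 * K) * f * (c + H ^ 2) = H * (K * (N - K) * x) := by
    have hne : (N - 2) * N ≠ 0 := by
      apply mul_ne_zero <;> linarith
    apply mul_left_cancel₀ hne
    linear_combination K ^ 2 * h3 - (N - K) ^ 2 * h4 + hS
  rw [key]
  constructor <;> field_simp
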